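/- Let X be a KU-algebra and let d be a derivation of X. Then the kernel d⁻¹(0) = {x ∈ X : d(x) = 0} is a subalgebra of X. -/

import Mathlib

/-- A KU-algebra: a set `X` with a binary operation `⋆` and a constant `𝟎` satisfying
(KU1) `(x⋆y)⋆((y⋆z)⋆(x⋆z)) = 𝟎`, (KU2) `x⋆𝟎 = 𝟎`, (KU3) `𝟎⋆x = x`,
(KU4) `x⋆y = 𝟎` and `y⋆x = 𝟎` imply `x = y`. -/
class KUAlgebra (X : Type*) where
  star : X → X → X
  zero : X
  ku1 : ∀ x y z : X, star (star x y) (star (star y z) (star x z)) = zero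
  ku2 : ∀ x : X, star x zero = zero
  ku3 : ∀ x : X, star zero x = x
  ku4 : ∀ x y : X, star x y = zero → star y x = zero → x = y

infixl:70 " ⋆ " => KUAlgebra.star
notation "𝟎" => KUAlgebra.zero

/-- The order `x ≤ y ↔ y ⋆ x = 𝟎` on a KU-algebra. -/
def KUle {X : Type*} [KUAlgebra X] (x y : X) : Prop := y ⋆ x = 𝟎

/-- `x ∧ y := (x ⋆ y) ⋆ y` in a KU-algebra. -/
def KUwedge {X : Type*} [KUAlgebra X] (x y : X) : X := (x ⋆ y) ⋆ y

/-- An (ℓ,r)-derivation: `d(x⋆y) = (d(x)⋆y) ∧ (x⋆d(y))`. -/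
def IsLRDeriv {X : Type*} [KUAlgebra X] (d : X → X) : Prop :=
  ∀ x y : X, d (x ⋆ y) = KUwedge (d x ⋆ y) (x ⋆ d y)

/-- An (r,ℓ)-derivation: `d(x⋆y) = (x⋆d(y)) ∧ (d(x)⋆y)`. -/
def IsRLDeriv {X : Type*} [KUAlgebra X] (d : X → X) : Prop :=
  ∀ x y : X, d (x ⋆ y) = KUwedge (x ⋆ d y) (d x ⋆ y)

/-- A derivation is both an (ℓ,r)- and an (r,ℓ)-derivation. -/
def IsDeriv {X : Type*} [KUAlgebra X] (d : X → X) : Prop := IsLRDeriv d ∧ IsRLDeriv d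

/-- A fuzzy left derivations KU-ideal of `X` with respect to a self map `d`:
a fuzzy set `μ : X → [0,1]` with `μ 𝟎 ≥ μ x` and
`μ (d (x ⋆ z)) ≥ min (μ (d x ⋆ (y ⋆ z))) (μ (d y))`. -/
def IsFuzzyLeftDerivKUIdeal {X : Type*} [KUAlgebra X] (d : X → X) (μ : X → ℝ) : Prop :=
  (∀ x : X, μ x ∈ Set.Icc (0 : ℝ) 1) ∧
  (∀ x : X, μ 𝟎 ≥ μ x) ∧
  (∀ x y z : X, μ (d (x ⋆ z)) ≥ min (μ (d x ⋆ (y ⋆ z))) (μ (d y)))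

/-- A fuzzy right derivations KU-ideal of `X` with respect to a self map `d`:
a fuzzy set `μ : X → [0,1]` with `μ 𝟎 ≥ μ x` and
`μ (d (x ⋆ z)) ≥ min (μ (x ⋆ d (y ⋆ z))) (μ (d y))`. -/
def IsFuzzyRightDerivKUIdeal {X : Type*} [KUAlgebra X] (d : X → X) (μ : X → ℝ) : Prop :=
  (∀ x : X, μ x ∈ Set.Icc (0 : ℝ) 1) ∧
  (∀ x : X, μ 𝟎 ≥ μ x) ∧
  (∀ x y z : X, μ (d (x ⋆ z)) ≥ min (μ (x ⋆ d (y ⋆ z))) (μ (d y)))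

/-- The kernel `d⁻¹(𝟎) = {x : d x = 𝟎}` of a derivation `d` is a subalgebra. -/
theorem deriv_kernel_subalgebra {X : Type*} [KUAlgebra X] (d : X → X) (hd : IsDeriv d) :
    ∀ x ∈ {a : X | d a = 𝟎}, ∀ y ∈ {a : X | d a = 𝟎}, x ⋆ y ∈ {a : X | d a = 𝟎} := by
  intro x _ y hy
  have hy : d y = 𝟎 := hy
  -- Since `x ⋆ d y = 𝟎`, the (ℓ,r) rule gives `d (x ⋆ y) = (d x ⋆ y) ∧ 𝟎`, and `a ∧ 𝟎 = 𝟎`.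
  change d (x ⋆ y) = 𝟎
  rw [hd.1 x y, KUwedge, hy, KUAlgebra.ku2 x, KUAlgebra.ku2]
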